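/- arXiv:1605.00863 — 2 statements merged into one kernel-verified Lean document; each statement's English description precedes it below -/
import Mathlib

section
/- Let T be a [3,2]-transversal design, let B be a block of T, and let x_1, x_2, x_3 be any 3 distinct nodes of T. Then there are 3 pairwise internally-disjoint paths in T from B to x_1, x_2 and x_3 (one path to each node). Moreover, if the 3 nodes lie in 3 different groups then each path has length at most 5, whereas if the 3 nodes lie in only 2 different groups then each path has length at most 3. -/
/-- The bipartite graph on `ν ⊕ β` (nodes on the left, blocks on the right)
determined by the adjacency relation `adj`. -/
def bipGraph {ν β : Type} (adj : ν → β → Prop) : SimpleGraph (ν ⊕ β) :=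
  SimpleGraph.fromRel fun u v => ∃ x b, u = Sum.inl x ∧ v = Sum.inr b ∧ adj x b

/-- A `[Δ,k]`-transversal design: the nodes form a set of size `Δ * k` partitioned
into `Δ` groups (the fibres of `group`), each of size `k`; there are `k ^ 2` blocks;
every block is adjacent to exactly one node of each group; and every pair of nodes
lying in distinct groups is adjacent to exactly one common block (the block
*generated* by the pair). -/
structure IsTransversalDesign {ν β : Type} (Δ k : ℕ)
    (group : ν → Fin Δ) (adj : ν → β → Prop) : Prop where
  two_le_k : 2 ≤ k
  two_le_Δ : 2 ≤ Δ
  groupCard : ∀ i : Fin Δ, Nat.card {x : ν // group x = i} = k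
  blockCard : Nat.card β = k ^ 2
  blockMeets : ∀ (b : β) (i : Fin Δ), ∃! x : ν, group x = i ∧ adj x b
  pairGen : ∀ x y : ν, group x ≠ group y → ∃! b : β, adj x b ∧ adj y b

/-- A family of walks (with sources `s i` and destinations `t i`) is pairwise
internally-disjoint if every vertex which is a source or destination of some member
of the family appears on members of the family only as their source or destination,
and every vertex which is not a source or destination of any member of the family
lies on at most one member of the family. -/
def PairwiseInternallyDisjoint {V ι : Type} {G : SimpleGraph V} {s t : ι → V}
    (p : (i : ι) → G.Walk (s i) (t i)) : Prop :=
  (∀ i j : ι, ∀ v : V, v ∈ (p i).support → (v = s j ∨ v = t j) → v = s i ∨ v = t i) ∧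
  (∀ i j : ι, ∀ v : V, (∀ l : ι, v ≠ s l ∧ v ≠ t l) →
    v ∈ (p i).support → v ∈ (p j).support → i = j)

/-- A family of walks is pairwise edge-disjoint if every edge lies on at most one
member of the family. -/
def PairwiseEdgeDisjoint {V ι : Type} {G : SimpleGraph V} {s t : ι → V}
    (p : (i : ι) → G.Walk (s i) (t i)) : Prop :=
  ∀ i j : ι, ∀ e : Sym2 V, e ∈ (p i).edges → e ∈ (p j).edges → i = j

open SimpleGraph

lemma bipGraph_adj_inl_inr {ν β : Type} {adj : ν → β → Prop} {x : ν} {b : β} :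
    (bipGraph adj).Adj (Sum.inl x) (Sum.inr b) ↔ adj x b := by
  simp [bipGraph, SimpleGraph.fromRel_adj]

lemma bipGraph_adj_inr_inl {ν β : Type} {adj : ν → β → Prop} {x : ν} {b : β} :
    (bipGraph adj).Adj (Sum.inr b) (Sum.inl x) ↔ adj x b := by
  rw [SimpleGraph.adj_comm, bipGraph_adj_inl_inr]

/-- Incidence-preserving maps of nodes and blocks induce a graph homomorphism. -/
def bipGraphHom {ν β ν' β' : Type} {adj : ν → β → Prop} {adj' : ν' → β' → Prop}
    (f : ν → ν') (g : β → β') (h : ∀ x b, adj x b → adj' (f x) (g b)) :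
    bipGraph adj →g bipGraph adj' where
  toFun := Sum.map f g
  map_rel' := by
    rintro (x | b) (y | c) hadj
    · simp [bipGraph] at hadj
    · exact bipGraph_adj_inl_inr.2 (h _ _ (bipGraph_adj_inl_inr.1 hadj))
    · exact bipGraph_adj_inr_inl.2 (h _ _ (bipGraph_adj_inr_inl.1 hadj))
    · simp [bipGraph] at hadj

/-- Walks with a common source that pairwise meet only there are internally disjoint. -/
lemma pairwiseInternallyDisjoint_of_common_source {V ι : Type} {G : SimpleGraph V} {s : V}
    {t : ι → V} (p : (i : ι) → G.Walk s (t i))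
    (h : ∀ i j, i ≠ j → ∀ v ∈ (p i).support, v ∈ (p j).support → v = s) :
    PairwiseInternallyDisjoint (s := fun _ => s) p := by
  refine ⟨fun i j v hv hst => ?_, fun i j v hv hi hj => ?_⟩
  · by_cases hij : i = j
    · exact hij ▸ hst
    · rcases hst with rfl | rfl
      · exact Or.inl rfl
      · exact Or.inl (h i j hij _ hv (p j).end_mem_support)
  · by_contra hij
    exact (hv i).1 (h i j hij v hi hj)

/-- The incidence relation of the `[3,2]`-transversal design seen from the block `none`:
`(i, true)` is the node of group `i` on `none`, `(i, false)` is the other node of that group,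
and `some i` is the second block on `(i, true)`. -/
def ModelAdj (y : Fin 3 × Bool) (c : Option (Fin 3)) : Prop :=
  if y.2 then c = none ∨ c = some y.1 else c ≠ none ∧ c ≠ some y.1

instance (y : Fin 3 × Bool) (c : Option (Fin 3)) : Decidable (ModelAdj y c) := by
  unfold ModelAdj; infer_instance

/-- A path of the model from `none` to `y` leaving through the node `(j, true)`
(the index `j` is ignored when `y` is itself a neighbour of `none`). -/
def modelPath : (y : Fin 3 × Bool) → (j : Fin 3) →
    (bipGraph ModelAdj).Walk (Sum.inr none) (Sum.inl y)
  | (i, true), _ => .cons (bipGraph_adj_inr_inl.2 (by simp [ModelAdj])) .nil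
  | (i, false), j =>
    .cons (v := Sum.inl (j, true)) (bipGraph_adj_inr_inl.2 (by simp [ModelAdj])) <|
    .cons (v := Sum.inr (some j)) (bipGraph_adj_inl_inr.2 (by simp [ModelAdj])) <|
    if h : j = i then
      .cons (v := Sum.inl (i + 1, false))
        (bipGraph_adj_inr_inl.2 (by subst h; revert j; decide)) <|
      .cons (v := Sum.inr (some (i + 2)))
        (bipGraph_adj_inl_inr.2 (by clear h; revert i; decide)) <|
      .cons (bipGraph_adj_inr_inl.2 (by clear h; revert i; decide)) .nil
    else .cons (bipGraph_adj_inr_inl.2 (by simp [ModelAdj, h])) .nil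

lemma modelPath_isPath (y : Fin 3 × Bool) (j : Fin 3) : (modelPath y j).IsPath := by
  rw [Walk.isPath_def]
  revert y j
  decide

lemma length_modelPath_le_five : ∀ (y : Fin 3 × Bool) (j : Fin 3),
    (modelPath y j).length ≤ 5 := by
  decide

lemma length_modelPath_le_three : ∀ (y : Fin 3 × Bool) (j : Fin 3),
    (y.2 = false → j ≠ y.1) → (modelPath y j).length ≤ 3 := by
  decide

set_option synthInstance.maxSize 1000 in
lemma modelPath_inter : ∀ (y : Fin 3 × Bool) (j : Fin 3) (z : Fin 3 × Bool) (k : Fin 3),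
    y ≠ z → j ≠ k → (y.2 = true → j = y.1) → (z.2 = true → k = z.1) →
    (y.2 = false → j = y.1 → z.2 = true) → (z.2 = false → k = z.1 → y.2 = true) →
    ∀ v ∈ (modelPath y j).support, ∀ w ∈ (modelPath z k).support, v = w → v = Sum.inr none := by
  decide

set_option maxRecDepth 10000 in
/-- Suitable first nodes for the three paths of a fan. -/
lemma exists_fan_indices (x : Fin 3 → Fin 3 × Bool) (hx : Function.Injective x) :
    ∃ σ : Fin 3 → Fin 3, Function.Injective σ ∧
      (∀ l, (x l).2 = true → σ l = (x l).1) ∧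
      (∀ l m, l ≠ m → (x l).2 = false → σ l = (x l).1 → (x m).2 = true) ∧
      (¬ (Function.Injective fun l => (x l).1) →
        ∀ l, (x l).2 = false → σ l ≠ (x l).1) := by
  revert x
  decide

lemma model_fan (x : Fin 3 → Fin 3 × Bool) (hx : Function.Injective x) :
    ∃ p : (i : Fin 3) → (bipGraph ModelAdj).Walk (Sum.inr none) (Sum.inl (x i)),
      (∀ i, (p i).IsPath) ∧
      (∀ i j, i ≠ j → ∀ v ∈ (p i).support, v ∈ (p j).support → v = Sum.inr none) ∧
      (∀ i, (p i).length ≤ 5) ∧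
      (¬ (Function.Injective fun i => (x i).1) → ∀ i, (p i).length ≤ 3) := by
  obtain ⟨σ, hσ, htrue, hlong, hshort⟩ := exists_fan_indices x hx
  exact ⟨fun i => modelPath (x i) (σ i), fun i => modelPath_isPath _ _,
    fun i j hij v hi hj => modelPath_inter _ _ _ _ (hx.ne hij) (hσ.ne hij) (htrue i) (htrue j)
      (hlong i j hij) (hlong j i hij.symm) v hi v hj rfl,
    fun i => length_modelPath_le_five _ _,
    fun h i => length_modelPath_le_three _ _ (hshort h i)⟩

namespace IsTransversalDesign

variable {ν β : Type} {adj : ν → β → Prop}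

lemma eq_of_group_eq {Δ k : ℕ} {group : ν → Fin Δ}
    (hT : IsTransversalDesign Δ k group adj) {y z : ν} {b : β}
    (h : group y = group z) (hy : adj y b) (hz : adj z b) : y = z :=
  (hT.blockMeets b (group z)).unique ⟨h, hy⟩ ⟨rfl, hz⟩

lemma block_eq {Δ k : ℕ} {group : ν → Fin Δ}
    (hT : IsTransversalDesign Δ k group adj) {y z : ν} {b c : β}
    (h : group y ≠ group z) (hyb : adj y b) (hzb : adj z b) (hyc : adj y c) (hzc : adj z c) :
    b = c :=
  (hT.pairGen y z h).unique ⟨hyb, hzb⟩ ⟨hyc, hzc⟩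

/-- In a `[Δ,2]`-transversal design, a block splits each group into the node it contains
and the node it avoids. -/
lemma exists_split {Δ : ℕ} {group : ν → Fin Δ}
    (hT : IsTransversalDesign Δ 2 group adj) (B : β) :
    ∃ f : Fin Δ × Bool → ν, (∀ y, group (f y) = y.1) ∧ Function.Bijective f ∧
      (∀ i, adj (f (i, true)) B) ∧ ∀ i, ¬ adj (f (i, false)) B := by
  choose a ha _ using fun i => hT.blockMeets B i
  have hex (i : Fin Δ) : ∃ b, group b = i ∧ b ≠ a i ∧ ∀ z, group z = i → z = a i ∨ z = b := by
    obtain ⟨⟨b, hb⟩, hne, huniq⟩ :=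
      (Nat.card_eq_two_iff' (⟨a i, (ha i).1⟩ : {x : ν // group x = i})).1 (hT.groupCard i)
    refine ⟨b, hb, fun h => hne (Subtype.ext h), fun z hz => ?_⟩
    by_contra! hcon
    exact hcon.2 (congrArg Subtype.val (huniq ⟨z, hz⟩ fun h => hcon.1 (congrArg Subtype.val h)))
  choose b hb hba hcover using hex
  refine ⟨fun y => if y.2 then a y.1 else b y.1, ?_, ⟨?_, fun z => ?_⟩, fun i => (ha i).2,
    fun i h => hba i (hT.eq_of_group_eq ((hb i).trans (ha i).1.symm) h (ha i).2)⟩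
  · rintro ⟨i, _ | _⟩
    exacts [hb i, (ha i).1]
  · rintro ⟨i, s⟩ ⟨j, t⟩ h
    have hij : i = j := by
      have := congrArg group h
      cases s <;> cases t <;> simpa [hb, (ha _).1] using this
    subst hij
    cases s <;> cases t
    exacts [rfl, absurd h (hba i), absurd h.symm (hba i), rfl]
  · rcases hcover _ z rfl with h | h
    exacts [⟨(group z, true), h.symm⟩, ⟨(group z, false), h.symm⟩]

lemma exists_model {group : ν → Fin 3}
    (hT : IsTransversalDesign 3 2 group adj) (B : β) :
    ∃ (f : Fin 3 × Bool → ν) (g : Option (Fin 3) → β), (∀ y, group (f y) = y.1) ∧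
      Function.Bijective f ∧ Function.Injective g ∧ g none = B ∧
      ∀ y c, ModelAdj y c → adj (f y) (g c) := by
  obtain ⟨f, hgroup, hf, hB, hnB⟩ := hT.exists_split B
  have split (c : β) (i : Fin 3) : adj (f (i, true)) c ∨ adj (f (i, false)) c := by
    obtain ⟨z, ⟨hz, hadj⟩, -⟩ := hT.blockMeets c i
    obtain ⟨⟨j, s⟩, rfl⟩ := hf.surjective z
    obtain rfl : j = i := (hgroup _).symm.trans hz
    cases s
    exacts [Or.inr hadj, Or.inl hadj]
  have gne {i j : Fin 3} (s t : Bool) (h : i ≠ j) : group (f (i, s)) ≠ group (f (j, t)) := by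
    simpa only [hgroup] using h
  have excl (c : β) (i : Fin 3) (ht : adj (f (i, true)) c) (hs : adj (f (i, false)) c) : False :=
    absurd (hf.injective (hT.eq_of_group_eq (by simp only [hgroup]) ht hs)) (by simp)
  have hex (i : Fin 3) : ∃ c, adj (f (i, true)) c ∧ ∀ j, j ≠ i → adj (f (j, false)) c := by
    have h1 : i + 1 ≠ i := by revert i; decide
    have h2 : i + 2 ≠ i := by revert i; decide
    have h12 : i + 1 ≠ i + 2 := by revert i; decide
    obtain ⟨c, ⟨hc1, hc2⟩, -⟩ := hT.pairGen _ _ (gne false false h12)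
    refine ⟨c, (split c i).resolve_right fun hci => ?_, fun j hj => ?_⟩
    · obtain ⟨d, ⟨hd0, hd1⟩, -⟩ := hT.pairGen _ _ (gne true false h1.symm)
      rcases split d (i + 2) with hd2 | hd2
      · exact hnB (i + 1) (hT.block_eq (gne true true h2) hd2 hd0 (hB _) (hB _) ▸ hd1)
      · exact excl c i (hT.block_eq (gne false false h12) hd1 hd2 hc1 hc2 ▸ hd0) hci
    · have : j = i + 1 ∨ j = i + 2 := by clear * - hj; revert i j; decide
      rcases this with rfl | rfl
      exacts [hc1, hc2]
  choose C hC hC' using hex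
  refine ⟨f, fun c => c.elim B C, hgroup, hf, ?_, rfl, ?_⟩
  · have hBC (i : Fin 3) : B ≠ C i := fun h =>
      hnB (i + 1) (h ▸ hC' i (i + 1) (by clear h; revert i; decide))
    rintro (_ | i) (_ | j) h
    · rfl
    · exact absurd h (hBC j)
    · exact absurd h.symm (hBC i)
    · by_contra hij
      have h : C i = C j := h
      exact excl (C j) j (hC j) (h ▸ hC' i j fun e => hij (e ▸ rfl))
  · rintro ⟨i, _ | _⟩ (_ | j) h
    · simp [ModelAdj] at h
    · exact hC' j i (by simpa [ModelAdj, eq_comm] using h)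
    · exact hB i
    · obtain rfl : j = i := by simpa [ModelAdj] using h
      exact hC j

end IsTransversalDesign

/-- In a `[3,2]`-transversal design, given a block `B` and any `3`
distinct nodes `x 0`, `x 1`, `x 2`, there are `3` pairwise internally-disjoint
paths from `B` to the three nodes.  Moreover, if the `3` nodes lie in `3` different
groups then each path has length at most `5`, whereas if they lie in only `2`
different groups then each path has length at most `3`. -/
theorem transversalDesign_three_two_fan {ν β : Type}
    (group : ν → Fin 3) (adj : ν → β → Prop)
    (hT : IsTransversalDesign 3 2 group adj)
    (B : β) (x : Fin 3 → ν) (hx : Function.Injective x) :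
    ∃ p : (i : Fin 3) → (bipGraph adj).Walk (Sum.inr B) (Sum.inl (x i)),
      (∀ i : Fin 3, (p i).IsPath) ∧ PairwiseInternallyDisjoint p ∧
      ((Function.Injective fun i : Fin 3 => group (x i)) →
        ∀ i : Fin 3, (p i).length ≤ 5) ∧
      (¬ (Function.Injective fun i : Fin 3 => group (x i)) →
        ∀ i : Fin 3, (p i).length ≤ 3) := by
  obtain ⟨f, g, hgroup, hf, hg, rfl, hadj⟩ := hT.exists_model B
  obtain ⟨y, rfl⟩ : ∃ y, x = f ∘ y := hf.surjective.comp_left x |>.imp fun _ h => h.symm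
  obtain ⟨p, hpath, hdisj, hfive, hthree⟩ := model_fan y hx.of_comp
  have hφ : Function.Injective (bipGraphHom f g hadj) := Sum.map_injective.2 ⟨hf.injective, hg⟩
  refine ⟨fun i => (p i).map (bipGraphHom f g hadj),
    fun i => (hpath i).map hφ,
    pairwiseInternallyDisjoint_of_common_source _ fun i j hij v hi hj => ?_,
    fun _ i => (Walk.length_map _ _).trans_le (hfive i),
    fun h i => (Walk.length_map _ _).trans_le (hthree (by simpa [hgroup] using h) i)⟩
  obtain ⟨u, hu, rfl⟩ := List.mem_map.1 
    (Walk.support_map (bipGraphHom f g hadj) (p i) ▸ hi)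
  obtain ⟨w, hw, hwu⟩ := List.mem_map.1 
    (Walk.support_map (bipGraphHom f g hadj) (p j) ▸ hj)
  rw [hdisj i j hij u hu (hφ hwu ▸ hw)]
end

section
/- Let T be any [Δ,k]-transversal design where k, Δ ≥ 2 and Δ ≤ k. Let U be any block of T and let t_1, t_2, …, t_Δ be any Δ vertices of T (each a node or a block, called target-nodes or target-blocks as appropriate), where there may be repetitions. Then for each i = 1, 2, …, Δ there is a path π_i in T from U to t_i of length at most 7, so that the paths π_1, …, π_Δ are pairwise edge-disjoint. -/
namespace TransversalDesign

/-- The target `t` is reached directly from the `i`-th node of a block whose nodes are `x`: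
it is that node, or a block through it. -/
def IsDirect {ν β ι : Type} (adj : ν → β → Prop) (x : ι → ν) (t : ν ⊕ β) (i : ι) : Prop :=
  (∃ n, t = Sum.inl n ∧ n = x i) ∨ ∃ b, t = Sum.inr b ∧ adj (x i) b

open Classical in
/-- The weight of assigning the target `t` to the `i`-th node of a block whose nodes are `x`. -/
noncomputable def weight {ν β ι : Type} (group : ν → ι) (adj : ν → β → Prop) (x : ι → ν) :
    ν ⊕ β → ι → ℕ
  | Sum.inl n, i => if n = x i then 5 else if group n = i then 0 else 1
  | Sum.inr b, i => if adj (x i) b then 3 else 1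

section Weight

variable {ν β ι : Type} {group : ν → ι} {adj : ν → β → Prop} {x : ι → ν}

lemma three_le_weight {t : ν ⊕ β} {i : ι} (h : IsDirect adj x t i) :
    3 ≤ weight group adj x t i := by
  rcases h with ⟨n, rfl, hn⟩ | ⟨b, rfl, hb⟩
  · simp [weight, hn]
  · simp [weight, hb]

lemma weight_le_one {t : ν ⊕ β} {i : ι} (h : ¬ IsDirect adj x t i) :
    weight group adj x t i ≤ 1 := by
  rcases t with n | b
  · have : n ≠ x i := fun hn => h (Or.inl ⟨n, rfl, hn⟩)
    simp only [weight, this, if_false]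
    split_ifs <;> simp
  · have : ¬ adj (x i) b := fun hb => h (Or.inr ⟨b, rfl, hb⟩)
    simp [weight, this]

lemma one_le_weight {t : ν ⊕ β} {i : ι} (h : ¬ ∃ n, t = Sum.inl n ∧ group n = i) :
    1 ≤ weight group adj x t i := by
  rcases t with n | b
  · have : group n ≠ i := fun hn => h ⟨n, rfl, hn⟩
    simp only [weight, this, if_false]
    split_ifs <;> simp
  · simp only [weight]
    split_ifs <;> simp

end Weight

lemma exists_perm_swap_le {ι : Type} [Fintype ι] (w : ι → ι → ℕ) :
    ∃ σ : Equiv.Perm ι, ∀ j j', j ≠ j' →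
      w j (σ j') + w j' (σ j) ≤ w j (σ j) + w j' (σ j') := by
  classical
  obtain ⟨σ, hσ⟩ := Finite.exists_max fun σ : Equiv.Perm ι => ∑ j, w j (σ j)
  refine ⟨σ, fun j j' hj => ?_⟩
  have h := hσ (σ * Equiv.swap j j')
  have hmem : j' ∈ Finset.univ.erase j := by simp [hj.symm]
  rw [← Finset.add_sum_erase _ _ (Finset.mem_univ j), ← Finset.add_sum_erase _ _ hmem,
    ← Finset.add_sum_erase _ (fun j => w j (σ j)) (Finset.mem_univ j),
    ← Finset.add_sum_erase _ (fun j => w j (σ j)) hmem] at h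
  have hrest : ∑ i ∈ (Finset.univ.erase j).erase j', w i ((σ * Equiv.swap j j') i)
      = ∑ i ∈ (Finset.univ.erase j).erase j', w i (σ i) := by
    refine Finset.sum_congr rfl fun i hi => ?_
    simp only [Finset.mem_erase] at hi
    rw [Equiv.Perm.mul_apply, Equiv.swap_apply_of_ne_of_ne hi.2.1 hi.1]
  rw [hrest] at h
  simp only [Equiv.Perm.mul_apply, Equiv.swap_apply_left, Equiv.swap_apply_right] at h
  omega

/-- Targets can be assigned to the nodes `x` of a block in such a way that direct assignments
are preferred, those of nodes most of all, and that a target lying in the group it is assigned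
to only occurs when all targets not assigned directly lie in that group. -/
lemma exists_assignment {ν β ι : Type} [Fintype ι] (group : ν → ι) (adj : ν → β → Prop)
    (x : ι → ν) (t : ι → ν ⊕ β) :
    ∃ σ : Equiv.Perm ι,
      (∀ j j', ¬ IsDirect adj x (t j) (σ j) → ¬ IsDirect adj x (t j') (σ j') →
        ¬ IsDirect adj x (t j) (σ j')) ∧
      (∀ j j', ¬ IsDirect adj x (t j) (σ j) → t j = Sum.inl (x (σ j')) →
        ∀ b, t j' ≠ Sum.inr b) ∧
      (∀ j₀ n₀, t j₀ = Sum.inl n₀ → ¬ IsDirect adj x (t j₀) (σ j₀) → group n₀ = σ j₀ →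
        ∀ j, ¬ IsDirect adj x (t j) (σ j) → ∃ n, t j = Sum.inl n ∧ group n = σ j₀) := by
  obtain ⟨σ, hσ⟩ := exists_perm_swap_le fun j i => weight group adj x (t j) i
  refine ⟨σ, fun j j' hj hj' hd => ?_, fun j j' hj ht b hb => ?_,
    fun j₀ n₀ h₀ hd₀ hg j hj => ?_⟩
  · have hne : j ≠ j' := by rintro rfl; exact hj hd
    have h1 := hσ j j' hne
    have h2 := three_le_weight (group := group) hd
    have h3 := weight_le_one (group := group) hj
    have h4 := weight_le_one (group := group) hj'
    omega
  · have hne : j ≠ j' := by rintro rfl; rw [ht] at hb; cases hb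
    have h1 := hσ j j' hne
    have h3 := weight_le_one (group := group) hj
    have h4 : weight group adj x (t j) (σ j') = 5 := by rw [ht]; simp [weight]
    have h5 : weight group adj x (t j') (σ j') ≤ 3 := by
      rw [hb]; simp only [weight]; split_ifs <;> simp
    omega
  · by_contra hcon
    have hne : j ≠ j₀ := by rintro rfl; exact hcon ⟨n₀, h₀, hg⟩
    have h1 := hσ j j₀ hne
    have h2 := one_le_weight (adj := adj) (x := x) hcon
    have h3 := weight_le_one (group := group) hj
    have h4 : weight group adj x (t j₀) (σ j₀) = 0 := by
      have : n₀ ≠ x (σ j₀) := fun h => hd₀ (Or.inl ⟨n₀, h₀, h⟩)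
      rw [h₀]; simp [weight, this, hg]
    have h5 : 1 ≤ weight group adj x (t j₀) (σ j) := by
      refine one_le_weight ?_
      rintro ⟨n, hn, hgn⟩
      rw [h₀] at hn
      cases hn
      exact hne (σ.injective (hgn.symm.trans hg))
    omega

/-- The vertex `v` is joined to the block `U` by a walk of length at most `l` all of whose
edges are in `E`. -/
def Reach {ν β : Type} (adj : ν → β → Prop) (U : β) (E : Set (ν × β)) (l : ℕ) (v : ν ⊕ β) :
    Prop :=
  ∃ p : (bipGraph adj).Walk (Sum.inr U) v,
    p.length ≤ l ∧ ∀ e ∈ p.edges, ∃ n b, (n, b) ∈ E ∧ e = s(Sum.inl n, Sum.inr b)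

section Reach

variable {ν β : Type} {adj : ν → β → Prop} {U : β} {E : Set (ν × β)} {l : ℕ}

lemma bipGraph_adj {n : ν} {b : β} (h : adj n b) :
    (bipGraph adj).Adj (Sum.inl n) (Sum.inr b) := by
  rw [bipGraph, SimpleGraph.fromRel_adj]
  exact ⟨by simp, Or.inl ⟨n, b, rfl, rfl, h⟩⟩

lemma Reach.refl : Reach adj U E 0 (Sum.inr U) := ⟨.nil, by simp, by simp⟩

lemma Reach.mono {m : ℕ} {v : ν ⊕ β} (h : Reach adj U E l v) (hlm : l ≤ m) :
    Reach adj U E m v := by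
  obtain ⟨p, hp, he⟩ := h
  exact ⟨p, hp.trans hlm, he⟩

lemma Reach.node {n : ν} {b : β} (h : Reach adj U E l (Sum.inr b)) (ha : adj n b)
    (hE : (n, b) ∈ E) : Reach adj U E (l + 1) (Sum.inl n) := by
  obtain ⟨p, hp, he⟩ := h
  refine ⟨p.concat (bipGraph_adj ha).symm, by simpa using hp, fun e h => ?_⟩
  rw [SimpleGraph.Walk.edges_concat, List.concat_eq_append, List.mem_append,
    List.mem_singleton] at h
  rcases h with h | rfl
  · exact he e h
  · exact ⟨n, b, hE, Sym2.eq_swap⟩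

lemma Reach.block {n : ν} {b : β} (h : Reach adj U E l (Sum.inl n)) (ha : adj n b)
    (hE : (n, b) ∈ E) : Reach adj U E (l + 1) (Sum.inr b) := by
  obtain ⟨p, hp, he⟩ := h
  refine ⟨p.concat (bipGraph_adj ha), by simpa using hp, fun e h => ?_⟩
  rw [SimpleGraph.Walk.edges_concat, List.concat_eq_append, List.mem_append,
    List.mem_singleton] at h
  rcases h with h | rfl
  · exact he e h
  · exact ⟨n, b, hE, rfl⟩

lemma exists_paths {ι : Type} {t : ι → ν ⊕ β} (E : ι → Set (ν × β))
    (hr : ∀ j, Reach adj U (E j) l (t j)) (hE : ∀ i j e, e ∈ E i → e ∈ E j → i = j) :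
    ∃ p : (i : ι) → (bipGraph adj).Walk (Sum.inr U) (t i),
      (∀ i, (p i).IsPath ∧ (p i).length ≤ l) ∧ PairwiseEdgeDisjoint p := by
  classical
  choose p hp he using hr
  refine ⟨fun i => (p i).bypass,
    fun i => ⟨(p i).bypass_isPath, ((p i).length_bypass_le_length).trans (hp i)⟩,
    fun i j e hi hj => ?_⟩
  obtain ⟨n, b, hnb, rfl⟩ := he i e ((p i).edges_bypass_subset_edges hi)
  obtain ⟨n', b', hnb', heq⟩ := he j _ ((p j).edges_bypass_subset_edges hj)
  have : n = n' ∧ b = b' := by simpa using heq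
  obtain ⟨rfl, rfl⟩ := this
  exact hE i j _ hnb hnb'

end Reach

section Design

variable {ν β : Type} {Δ k : ℕ} {group : ν → Fin Δ} {adj : ν → β → Prop}
  (hT : IsTransversalDesign Δ k group adj)

/-- The node of the block `b` in the group `i`. -/
noncomputable def nodeAt (hT : IsTransversalDesign Δ k group adj) (b : β) (i : Fin Δ) : ν :=
  (hT.blockMeets b i).choose

lemma group_nodeAt (b : β) (i : Fin Δ) : group (nodeAt hT b i) = i :=
  (hT.blockMeets b i).choose_spec.1.1

lemma adj_nodeAt (b : β) (i : Fin Δ) : adj (nodeAt hT b i) b :=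
  (hT.blockMeets b i).choose_spec.1.2

lemma eq_nodeAt {b : β} {n : ν} (h : adj n b) : n = nodeAt hT b (group n) :=
  (hT.blockMeets b (group n)).choose_spec.2 n ⟨rfl, h⟩

include hT

lemma node_unique {b : β} {n m : ν} (hn : adj n b) (hm : adj m b) (h : group n = group m) :
    n = m := by
  rw [eq_nodeAt hT hn, eq_nodeAt hT hm, h]

lemma exists_ne_group (i : Fin Δ) : ∃ g, g ≠ i := by
  have : Nontrivial (Fin Δ) := Fin.nontrivial_iff_two_le.2 hT.two_le_Δ
  exact exists_ne i

lemma exists_node_ne (x : ν) (i : Fin Δ) : ∃ n, group n = i ∧ n ≠ x := by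
  have hc := hT.groupCard i
  have hk := hT.two_le_k
  have : Finite {x : ν // group x = i} := Nat.finite_of_card_ne_zero (by omega)
  have : Nontrivial {x : ν // group x = i} := Finite.one_lt_card_iff_nontrivial.1 (by omega)
  obtain ⟨a, b, hab⟩ := exists_pair_ne {x : ν // group x = i}
  by_cases h : a.1 = x
  · exact ⟨b, b.2, fun hb => hab (Subtype.ext (h.trans hb.symm))⟩
  · exact ⟨a, a.2, h⟩

lemma block_unique {n m : ν} {b c : β} (hg : group n ≠ group m) (hnb : adj n b) (hmb : adj m b)
    (hnc : adj n c) (hmc : adj m c) : b = c :=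
  (hT.pairGen n m hg).unique ⟨hnb, hmb⟩ ⟨hnc, hmc⟩

lemma index_unique {U b : β} (hb : b ≠ U) {i j : Fin Δ} (hi : adj (nodeAt hT U i) b)
    (hj : adj (nodeAt hT U j) b) : i = j := by
  by_contra hij
  exact hb (block_unique hT (by simpa [group_nodeAt hT] using hij) hi hj
    (adj_nodeAt hT U i) (adj_nodeAt hT U j))

/-- Distinct indices can be given distinct blocks through a node of `U`, with `U` itself given
to a prescribed index. -/
lemma exists_blocks_through (hΔk : Δ ≤ k) (U : β) (i j₀ : Fin Δ) :
    ∃ f : Fin Δ → β, Function.Injective f ∧ f j₀ = U ∧ ∀ j, adj (nodeAt hT U i) (f j) := by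
  classical
  obtain ⟨g, hg⟩ := exists_ne_group hT i
  have hc := hT.groupCard g
  have hk := hT.two_le_k
  have : Finite {x : ν // group x = g} := Nat.finite_of_card_ne_zero (by omega)
  obtain ⟨e⟩ : Nonempty (Fin Δ ↪ {x : ν // group x = g}) :=
    ⟨(Fin.castLEEmb hΔk).trans (Finite.equivFinOfCardEq hc).symm.toEmbedding⟩
  let y : {x : ν // group x = g} := ⟨nodeAt hT U g, group_nodeAt hT U g⟩
  let v : Fin Δ → {x : ν // group x = g} := fun j => Equiv.swap (e j₀) y (e j)
  have hv : Function.Injective v := (Equiv.injective _).comp e.injective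
  have hne : ∀ j, group (nodeAt hT U i) ≠ group (v j).1 := fun j => by
    rw [group_nodeAt hT, (v j).2]; exact hg.symm
  choose f hf _ using fun j => hT.pairGen _ _ (hne j)
  refine ⟨f, fun a b hab => hv (Subtype.ext ?_), ?_, fun j => (hf j).1⟩
  · refine node_unique hT (hf a).2 (hab ▸ (hf b).2) ?_
    rw [(v a).2, (v b).2]
  · refine block_unique hT (hne j₀) (hf j₀).1 (hf j₀).2 (adj_nodeAt hT U i) ?_
    have : v j₀ = y := Equiv.swap_apply_left _ _
    rw [this]
    exact adj_nodeAt hT U g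

lemma exists_block_avoiding (hΔk : Δ ≤ k) {U : β} {w : ν} (hw : ¬ adj w U) :
    ∃ c, adj w c ∧ ∀ i, ¬ adj (nodeAt hT U i) c := by
  classical
  obtain ⟨g, hg⟩ := exists_ne_group hT (group w)
  have hc := hT.groupCard g
  have hgen : ∀ i, ∃ b, i ≠ group w → adj w b ∧ adj (nodeAt hT U i) b := fun i => by
    by_cases hi : i = group w
    · exact ⟨U, fun h => absurd hi h⟩
    · obtain ⟨b, hb, _⟩ := hT.pairGen w (nodeAt hT U i)
        (by simpa [group_nodeAt hT] using Ne.symm hi)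
      exact ⟨b, fun _ => hb⟩
  choose B hB using hgen
  let f : Fin Δ → {x : ν // group x = g} := fun i =>
    ⟨nodeAt hT (B (if i = group w then g else i)) g, group_nodeAt hT _ g⟩
  have hf : ¬ Function.Surjective f := fun hs => by
    have hbij := hs.bijective_of_nat_card_le (by rw [hc, Nat.card_fin]; exact hΔk)
    exact hg (hbij.1 (by simp [f, hg]))
  obtain ⟨v, hv⟩ := not_forall.1 hf
  obtain ⟨c, hcw, _⟩ := hT.pairGen w v.1 (by rw [v.2]; exact hg.symm)
  refine ⟨c, hcw.1, fun i hi => ?_⟩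
  by_cases hiw : i = group w
  · have := node_unique hT hi hcw.1 (by simpa [group_nodeAt hT] using hiw)
    exact hw (this ▸ adj_nodeAt hT U i)
  · have hBc : B i = c := block_unique hT (by simpa [group_nodeAt hT] using Ne.symm hiw)
      (hB i hiw).1 (hB i hiw).2 hcw.1 hi
    refine hv ⟨i, Subtype.ext ?_⟩
    simp only [f, hiw, if_false, hBc]
    exact node_unique hT (adj_nodeAt hT c g) hcw.2 (by simp [group_nodeAt hT, v.2])

lemma reach_node_of_block {U : β} {E : Set (ν × β)} {i : Fin Δ} {z : ν} (hzU : ¬ adj z U)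
    (hz : group z ≠ i) (hU : (nodeAt hT U i, U) ∈ E)
    (hE : ∀ b, b ≠ U → adj (nodeAt hT U i) b → adj z b →
      (nodeAt hT U i, b) ∈ E ∧ (z, b) ∈ E) :
    Reach adj U E 3 (Sum.inl z) := by
  obtain ⟨b, ⟨hxb, hzb⟩, _⟩ := hT.pairGen (nodeAt hT U i) z
    (by simpa [group_nodeAt hT] using hz.symm)
  have hb : b ≠ U := by rintro rfl; exact hzU hzb
  obtain ⟨h1, h2⟩ := hE b hb hxb hzb
  exact ((Reach.refl.node (adj_nodeAt hT U i) hU).block hxb h1).node hzb h2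

/-- The edges used by a direct path to `t` through the `i`-th node of `U`. -/
def directEdges (hT : IsTransversalDesign Δ k group adj) (U : β) (t : ν ⊕ β) (i : Fin Δ) :
    Set (ν × β) :=
  {e | e.1 = nodeAt hT U i ∧ (e.2 = U ∨ t = Sum.inr e.2)}

lemma reach_of_isDirect {U : β} {t : ν ⊕ β} {i : Fin Δ}
    (h : IsDirect adj (nodeAt hT U) t i) : Reach adj U (directEdges hT U t i) 7 t := by
  have h1 : Reach adj U (directEdges hT U t i) 1 (Sum.inl (nodeAt hT U i)) :=
    Reach.refl.node (adj_nodeAt hT U i) ⟨rfl, Or.inl rfl⟩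
  rcases h with ⟨n, rfl, rfl⟩ | ⟨b, rfl, hb⟩
  · exact h1.mono (by norm_num)
  · exact (h1.block hb ⟨rfl, Or.inr rfl⟩).mono (by norm_num)

/-- A target not lying on the `i`-th node of `U` is reached through that node while avoiding the
direct edges of all other paths. -/
lemma reach_avoiding {U : β} {t : ν ⊕ β} {i : Fin Δ}
    (hd : ¬ IsDirect adj (nodeAt hT U) t i) (E : Set (ν × β))
    (hnode : ∀ n b, ¬ adj n U → (n, b) ∈ E) (hi : ∀ b, (nodeAt hT U i, b) ∈ E)
    (ht : ∀ b, b ≠ U → ∀ n, t = Sum.inl n → (n, b) ∈ E) : Reach adj U E 7 t := by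
  have key : ∀ z, group z = i → z ≠ nodeAt hT U i → ¬ adj z U ∧ Reach adj U E 5 (Sum.inl z) := by
    intro z hz hzx
    have hzU : ¬ adj z U := fun h => hzx (hz ▸ eq_nodeAt hT h)
    obtain ⟨m, hm⟩ := exists_ne_group hT i
    obtain ⟨v, hvm, hv⟩ := exists_node_ne hT (nodeAt hT U m) m
    have hvU : ¬ adj v U := fun h => hv (hvm ▸ eq_nodeAt hT h)
    have h3 : Reach adj U E 3 (Sum.inl v) :=
      reach_node_of_block hT hvU (by rw [hvm]; exact hm) (hi U)
        fun b _ _ _ => ⟨hi b, hnode v b hvU⟩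
    obtain ⟨c, ⟨hvc, hzc⟩, _⟩ := hT.pairGen v z (by rw [hvm, hz]; exact hm)
    exact ⟨hzU, (h3.block hvc (hnode v c hvU)).node hzc (hnode z c hzU)⟩
  rcases t with n | b
  · have hn : n ≠ nodeAt hT U i := fun h => hd (Or.inl ⟨n, rfl, h⟩)
    by_cases hg : group n = i
    · exact (key n hg hn).2.mono (by norm_num)
    · obtain ⟨z, hz, hzx⟩ := exists_node_ne hT (nodeAt hT U i) i
      obtain ⟨hzU, h5⟩ := key z hz hzx
      obtain ⟨c, ⟨hzc, hnc⟩, _⟩ := hT.pairGen z n (by rw [hz]; exact Ne.symm hg)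
      exact (h5.block hzc (hnode z c hzU)).node hnc
        (ht c (by rintro rfl; exact hzU hzc) n rfl)
  · have hz : nodeAt hT b i ≠ nodeAt hT U i := fun h =>
      hd (Or.inr ⟨b, rfl, h ▸ adj_nodeAt hT b i⟩)
    obtain ⟨hzU, h5⟩ := key _ (group_nodeAt hT b i) hz
    exact (h5.block (adj_nodeAt hT b i) (hnode _ b hzU)).mono (by norm_num)

/-- The edges through the `i`-th node of `U`, together with all edges of the other blocks at
that node. -/
def fanEdges (hT : IsTransversalDesign Δ k group adj) (U : β) (i : Fin Δ) : Set (ν × β) :=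
  {e | (e.1 = nodeAt hT U i ∧ e.2 = U) ∨ (e.2 ≠ U ∧ adj (nodeAt hT U i) e.2)}

lemma fanEdges_disjoint {U : β} {i j : Fin Δ} {e : ν × β} (hi : e ∈ fanEdges hT U i)
    (hj : e ∈ fanEdges hT U j) : i = j := by
  rcases hi with ⟨h1, h2⟩ | ⟨h1, h2⟩ <;> rcases hj with ⟨h3, h4⟩ | ⟨h3, h4⟩
  · rw [← group_nodeAt hT U i, ← h1, h3, group_nodeAt hT]
  · exact absurd h2 h3
  · exact absurd h4 h1
  · exact index_unique hT h1 h2 h4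

lemma directEdges_subset_fanEdges {U : β} {t : ν ⊕ β} {i : Fin Δ}
    (h : IsDirect adj (nodeAt hT U) t i) : directEdges hT U t i ⊆ fanEdges hT U i := by
  rintro ⟨n, b⟩ ⟨h1, h2⟩
  by_cases hb : b = U
  · exact Or.inl ⟨h1, hb⟩
  · refine Or.inr ⟨hb, ?_⟩
    have ht : t = Sum.inr b := h2.resolve_left hb
    rcases h with ⟨n, h, _⟩ | ⟨c, h, hc⟩
    · rw [ht] at h; cases h
    · rw [ht] at h; cases h; exact hc

lemma reach_fan {U : β} {i : Fin Δ} {z : ν} (F : Set (ν × β)) (hzU : ¬ adj z U)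
    (hz : group z ≠ i) : Reach adj U (fanEdges hT U i ∪ F) 3 (Sum.inl z) :=
  reach_node_of_block hT hzU hz (Or.inl (Or.inl ⟨rfl, rfl⟩))
    fun _ hb hxb _ => ⟨Or.inl (Or.inr ⟨hb, hxb⟩), Or.inl (Or.inr ⟨hb, hxb⟩)⟩

/-- Paths exist as soon as each target not assigned directly is reached by its fan and a set of
additional edges, these sets being disjoint from each other and from all other edges. -/
lemma exists_paths_of_extra {U : β} {t : Fin Δ → ν ⊕ β} (σ : Equiv.Perm (Fin Δ))
    (F : Fin Δ → Set (ν × β))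
    (hreach : ∀ j, ¬ IsDirect adj (nodeAt hT U) (t j) (σ j) →
      Reach adj U (fanEdges hT U (σ j) ∪ F j) 7 (t j))
    (hFU : ∀ j, ∀ e ∈ F j, e.2 ≠ U)
    (hFfan : ∀ j j', ∀ e ∈ F j, ¬ IsDirect adj (nodeAt hT U) (t j') (σ j') →
      ¬ adj (nodeAt hT U (σ j')) e.2)
    (hFdirect : ∀ j j', ∀ e ∈ F j, e.1 = nodeAt hT U (σ j') → t j' ≠ Sum.inr e.2)
    (hFF : ∀ i j e, e ∈ F i → e ∈ F j → i = j) :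
    ∃ p : (i : Fin Δ) → (bipGraph adj).Walk (Sum.inr U) (t i),
      (∀ i, (p i).IsPath ∧ (p i).length ≤ 7) ∧ PairwiseEdgeDisjoint p := by
  classical
  have hFd : ∀ j j', ∀ e ∈ F j, e ∉ directEdges hT U (t j') (σ j') := by
    rintro j j' e he ⟨h1, h2 | h2⟩
    · exact hFU j e he h2
    · exact hFdirect j j' e he h1 h2
  have hFf : ∀ j j', ∀ e ∈ F j, ¬ IsDirect adj (nodeAt hT U) (t j') (σ j') →
      e ∉ fanEdges hT U (σ j') := by
    rintro j j' e he hd (⟨_, h2⟩ | ⟨_, h2⟩)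
    · exact hFU j e he h2
    · exact hFfan j j' e he hd h2
  refine exists_paths (fun j => if IsDirect adj (nodeAt hT U) (t j) (σ j)
    then directEdges hT U (t j) (σ j) else fanEdges hT U (σ j) ∪ F j) (fun j => ?_) ?_
  · split_ifs with h
    · exact reach_of_isDirect hT h
    · exact hreach j h
  · intro i j e hi hj
    split_ifs at hi hj with h1 h2 h2
    · exact σ.injective (fanEdges_disjoint hT (directEdges_subset_fanEdges hT h1 hi)
        (directEdges_subset_fanEdges hT h2 hj))
    · rcases hj with hj | hj
      · exact σ.injective (fanEdges_disjoint hT (directEdges_subset_fanEdges hT h1 hi) hj)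
      · exact absurd hi (hFd j i e hj)
    · rcases hi with hi | hi
      · exact σ.injective (fanEdges_disjoint hT hi (directEdges_subset_fanEdges hT h2 hj))
      · exact absurd hj (hFd i j e hi)
    · rcases hi with hi | hi <;> rcases hj with hj | hj
      · exact σ.injective (fanEdges_disjoint hT hi hj)
      · exact absurd hi (hFf j i e hj h1)
      · exact absurd hj (hFf i j e hi h2)
      · exact hFF i j e hi hj

lemma exists_paths_of_subsingleton {U : β} {t : Fin Δ → ν ⊕ β} (σ : Equiv.Perm (Fin Δ))
    (hnode : ∀ j j', ¬ IsDirect adj (nodeAt hT U) (t j) (σ j) →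
      t j = Sum.inl (nodeAt hT U (σ j')) → ∀ b, t j' ≠ Sum.inr b)
    (hsub : {j | ¬ IsDirect adj (nodeAt hT U) (t j) (σ j)}.Subsingleton) :
    ∃ p : (i : Fin Δ) → (bipGraph adj).Walk (Sum.inr U) (t i),
      (∀ i, (p i).IsPath ∧ (p i).length ≤ 7) ∧ PairwiseEdgeDisjoint p := by
  classical
  refine exists_paths (fun j => if IsDirect adj (nodeAt hT U) (t j) (σ j)
    then directEdges hT U (t j) (σ j)
    else {e | ∀ j', j' ≠ j → e ∉ directEdges hT U (t j') (σ j')}) (fun j => ?_) ?_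
  · split_ifs with h
    · exact reach_of_isDirect hT h
    · refine reach_avoiding hT h _ ?_ ?_ ?_
      · rintro n b hn j' _ ⟨h1, _⟩
        simp only at h1
        exact hn (h1 ▸ adj_nodeAt hT U _)
      · rintro b j' hj' ⟨h1, _⟩
        have := congrArg group h1
        simp only [group_nodeAt hT] at this
        exact hj' (σ.injective this.symm)
      · rintro b hb n hn j' _ ⟨h1, h2⟩
        simp only at h1
        exact hnode j j' h (h1 ▸ hn) b (h2.resolve_left hb)
  · intro i j e hi hj
    split_ifs at hi hj with h1 h2 h2
    · exact σ.injective (fanEdges_disjoint hT (directEdges_subset_fanEdges hT h1 hi)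
        (directEdges_subset_fanEdges hT h2 hj))
    · by_contra hij
      exact hj i hij hi
    · by_contra hij
      exact hi j (Ne.symm hij) hj
    · exact hsub h1 h2

lemma exists_paths_of_common_group (hΔk : Δ ≤ k) {U : β} {t : Fin Δ → ν ⊕ β}
    (σ : Equiv.Perm (Fin Δ)) {j₀ : Fin Δ}
    (hdirect : ∀ j j', ¬ IsDirect adj (nodeAt hT U) (t j) (σ j) →
      ¬ IsDirect adj (nodeAt hT U) (t j') (σ j') → ¬ IsDirect adj (nodeAt hT U) (t j) (σ j'))
    (hj₀ : ¬ IsDirect adj (nodeAt hT U) (t j₀) (σ j₀))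
    (hgroup : ∀ j, ¬ IsDirect adj (nodeAt hT U) (t j) (σ j) →
      ∃ n, t j = Sum.inl n ∧ group n = σ j₀) :
    ∃ p : (i : Fin Δ) → (bipGraph adj).Walk (Sum.inr U) (t i),
      (∀ i, (p i).IsPath ∧ (p i).length ≤ 7) ∧ PairwiseEdgeDisjoint p := by
  have hnU : ∀ j n, ¬ IsDirect adj (nodeAt hT U) (t j) (σ j) → t j = Sum.inl n →
      group n = σ j₀ → ¬ adj n U := fun j n hj hn hg h =>
    hdirect j j₀ hj hj₀ (Or.inl ⟨n, hn, hg ▸ eq_nodeAt hT h⟩)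
  obtain ⟨w, hw, hwg⟩ := hgroup j₀ hj₀
  have hwU := hnU j₀ w hj₀ hw hwg
  obtain ⟨c, hwc, hc⟩ := exists_block_avoiding hT hΔk hwU
  obtain ⟨g, hg⟩ := exists_ne_group hT (σ j₀)
  have hzU : ¬ adj (nodeAt hT c g) U := fun h => by
    have := eq_nodeAt hT h
    rw [group_nodeAt hT] at this
    exact hc g (this ▸ adj_nodeAt hT c g)
  have hcU : c ≠ U := by rintro rfl; exact hwU hwc
  refine exists_paths_of_extra hT σ
    (fun j => {e | j = j₀ ∧ e.2 = c ∧ ¬ adj e.1 U}) ?_ ?_ ?_ ?_ ?_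
  · intro j hj
    by_cases hjj : j = j₀
    · subst hjj
      rw [hw]
      have h3 := reach_fan hT (i := σ j) {e | j = j ∧ e.2 = c ∧ ¬ adj e.1 U} hzU
        (by simpa [group_nodeAt hT] using hg)
      exact ((h3.block (adj_nodeAt hT c g) (Or.inr ⟨rfl, rfl, hzU⟩)).node hwc
        (Or.inr ⟨rfl, rfl, hwU⟩)).mono (by norm_num)
    · obtain ⟨n, hn, hng⟩ := hgroup j hj
      rw [hn]
      refine (reach_fan hT _ (hnU j n hj hn hng) ?_).mono (by norm_num)
      rw [hng]
      exact fun h => hjj (σ.injective h.symm)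
  · rintro j e ⟨_, h, _⟩
    rw [h]; exact hcU
  · rintro j j' e ⟨_, h, _⟩ _
    rw [h]; exact hc _
  · rintro j j' e ⟨_, _, h⟩ he
    exact absurd (he ▸ adj_nodeAt hT U _) h
  · rintro i j e ⟨rfl, _⟩ ⟨rfl, _⟩
    rfl

lemma exists_paths_of_nontrivial (hΔk : Δ ≤ k) {U : β} {t : Fin Δ → ν ⊕ β}
    (σ : Equiv.Perm (Fin Δ))
    (hdirect : ∀ j j', ¬ IsDirect adj (nodeAt hT U) (t j) (σ j) →
      ¬ IsDirect adj (nodeAt hT U) (t j') (σ j') → ¬ IsDirect adj (nodeAt hT U) (t j) (σ j'))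
    (hnode : ∀ j j', ¬ IsDirect adj (nodeAt hT U) (t j) (σ j) →
      t j = Sum.inl (nodeAt hT U (σ j')) → ∀ b, t j' ≠ Sum.inr b)
    (hgroup : ∀ j n, ¬ IsDirect adj (nodeAt hT U) (t j) (σ j) → t j = Sum.inl n →
      group n ≠ σ j)
    (hnon : {j | ¬ IsDirect adj (nodeAt hT U) (t j) (σ j)}.Nontrivial) :
    ∃ p : (i : Fin Δ) → (bipGraph adj).Walk (Sum.inr U) (t i),
      (∀ i, (p i).IsPath ∧ (p i).length ≤ 7) ∧ PairwiseEdgeDisjoint p := by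
  classical
  set J : Set (Fin Δ) := {j | ¬ IsDirect adj (nodeAt hT U) (t j) (σ j)} with hJ
  obtain ⟨ρ, hρ, _⟩ := J.toFinset.exists_cycleOn
  rw [Set.coe_toFinset] at hρ
  have hρne : ∀ j ∈ J, ρ j ≠ j := fun j hj => hρ.apply_ne hnon hj
  have hρJ : ∀ j ∈ J, ρ j ∈ J := fun j hj => hρ.1.mapsTo hj
  choose f hfinj hfU hfadj using
    fun m : Fin Δ => exists_blocks_through hT hΔk U m (σ.symm m)
  -- the last block on the path to a target that is a block or a node of `U`
  let c : Fin Δ → β := fun j => Sum.elim (fun n => f (group n) j) id (t j)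
  have hcblock : ∀ j b, t j = Sum.inr b → c j = b := fun j b h => by simp [c, h]
  have hcnode : ∀ j n, t j = Sum.inl n → c j = f (group n) j := fun j n h => by simp [c, h]
  let S : Set (Fin Δ) := {j | j ∈ J ∧ ∀ n, t j = Sum.inl n → adj n U}
  have hcU : ∀ j ∈ S, c j ≠ U := by
    rintro j ⟨hj, hjU⟩ h
    rcases htj : t j with n | b
    · rw [hcnode j n htj, ← hfU (group n)] at h
      exact hgroup j n hj htj (σ.symm_apply_eq.1 (hfinj _ h).symm)
    · rw [hcblock j b htj] at h
      exact hj (Or.inr ⟨b, htj, h ▸ adj_nodeAt hT U _⟩)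
  have hcJ : ∀ j ∈ S, ∀ j' ∈ J, ¬ adj (nodeAt hT U (σ j')) (c j) := by
    rintro j hS j' hj' h
    obtain ⟨hj, hjU⟩ := hS
    refine hdirect j j' hj hj' ?_
    rcases htj : t j with n | b
    · have hn := eq_nodeAt hT (hjU n htj)
      have : group n = σ j' := by
        refine index_unique hT (hcU j ⟨hj, hjU⟩) ?_ h
        rw [hcnode j n htj]
        exact hfadj _ _
      exact Or.inl ⟨n, rfl, this ▸ hn⟩
    · rw [hcblock j b htj] at h
      exact Or.inr ⟨b, rfl, h⟩
  let z : Fin Δ → ν := fun j => nodeAt hT (c j) (σ (ρ j))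
  have hzU : ∀ j ∈ S, ¬ adj (z j) U := fun j hj h => by
    have h1 := eq_nodeAt hT h
    simp only [z, group_nodeAt hT] at h1
    exact hcJ j hj (ρ j) (hρJ j hj.1) (h1 ▸ adj_nodeAt hT _ _)
  refine exists_paths_of_extra hT σ
    (fun j => {e | j ∈ S ∧ e.2 = c j ∧ (e.1 = z j ∨ t j = Sum.inl e.1)}) ?_ ?_ ?_ ?_ ?_
  · intro j hj
    by_cases hS : j ∈ S
    · have h3 := (reach_fan hT (i := σ j)
        {e | j ∈ S ∧ e.2 = c j ∧ (e.1 = z j ∨ t j = Sum.inl e.1)} (hzU j hS) (by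
          simp only [z, group_nodeAt hT]
          exact fun h => hρne j hj (σ.injective h))).block
        (adj_nodeAt hT (c j) _) (Or.inr ⟨hS, rfl, Or.inl rfl⟩)
      rcases htj : t j with n | b
      · rw [htj] at h3
        refine (h3.node ?_ (Or.inr ⟨hS, rfl, Or.inr rfl⟩)).mono (by norm_num)
        rw [hcnode j n htj]
        conv_lhs => rw [eq_nodeAt hT (hS.2 n htj)]
        exact hfadj _ _
      · rw [htj, hcblock j b htj] at h3
        rw [hcblock j b htj]
        exact h3.mono (by norm_num)
    · have : ∃ n, t j = Sum.inl n ∧ ¬ adj n U := by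
        by_contra! hcon
        exact hS ⟨hj, hcon⟩
      obtain ⟨n, hn, hnU⟩ := this
      have h3 := (reach_fan hT
        {e | j ∈ S ∧ e.2 = c j ∧ (e.1 = z j ∨ t j = Sum.inl e.1)} hnU (hgroup j n hj hn)).mono
        (show 3 ≤ 7 by norm_num)
      rw [← hn] at h3
      exact h3
  · rintro j e ⟨hj, h, _⟩
    rw [h]; exact hcU j hj
  · rintro j j' e ⟨hj, h, _⟩ hd
    rw [h]; exact hcJ j hj j' hd
  · rintro j j' e ⟨hj, h, h' | h'⟩ he
    · exact absurd (h' ▸ he ▸ adj_nodeAt hT U _) (hzU j hj)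
    · exact hnode j j' hj.1 (he ▸ h') _
  · rintro i j ⟨n, b⟩ ⟨hi, h1, h2⟩ ⟨hj, h3, h4⟩
    simp only at h1 h2 h3 h4
    rcases h2 with h2 | h2 <;> rcases h4 with h4 | h4
    · have := congrArg group (h2.symm.trans h4)
      simp only [z, group_nodeAt hT] at this
      exact ρ.injective (σ.injective this)
    · exact absurd (h2 ▸ hj.2 n h4) (hzU i hi)
    · exact absurd (h4 ▸ hi.2 n h2) (hzU j hj)
    · rw [h1, hcnode i n h2, hcnode j n h4] at h3
      exact hfinj _ h3

end Design

end TransversalDesign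

/-- Let `T` be a `[Δ,k]`-transversal design with `Δ ≤ k`.  Let `U` be
any block and let `t 1, …, t Δ` be any `Δ` vertices of `T` (each a node or a block,
possibly with repetitions).  Then for each `i` there is a path `p i` from `U` to
`t i` of length at most `7`, so that these paths are pairwise edge-disjoint. -/
theorem transversalDesign_one_to_many_edgeDisjoint {ν β : Type} (Δ k : ℕ)
    (hΔk : Δ ≤ k)
    (group : ν → Fin Δ) (adj : ν → β → Prop)
    (hT : IsTransversalDesign Δ k group adj)
    (U : β) (t : Fin Δ → ν ⊕ β) :
    ∃ p : (i : Fin Δ) → (bipGraph adj).Walk (Sum.inr U) (t i),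
      (∀ i, (p i).IsPath ∧ (p i).length ≤ 7) ∧ PairwiseEdgeDisjoint p := by
  obtain ⟨σ, hdirect, hnode, hgroup⟩ :=
    TransversalDesign.exists_assignment group adj (TransversalDesign.nodeAt hT U) t
  rcases Set.subsingleton_or_nontrivial
    {j | ¬ TransversalDesign.IsDirect adj (TransversalDesign.nodeAt hT U) (t j) (σ j)} with h | h
  · exact TransversalDesign.exists_paths_of_subsingleton hT σ hnode h
  · by_cases hbad : ∃ j n, ¬ TransversalDesign.IsDirect adj (TransversalDesign.nodeAt hT U)
        (t j) (σ j) ∧ t j = Sum.inl n ∧ group n = σ j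
    · obtain ⟨j₀, n₀, hj₀, hn₀, hg⟩ := hbad
      exact TransversalDesign.exists_paths_of_common_group hT hΔk σ hdirect hj₀
        (hgroup j₀ n₀ hn₀ hj₀ hg)
    · exact TransversalDesign.exists_paths_of_nontrivial hT hΔk σ hdirect hnode
        (fun j n hj hn hg => hbad ⟨j, n, hj, hn, hg⟩) h
end
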